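/- Every finite connected simple graph G of order n ≥ 4 and minimum degree δ has a connected two-way two-step dominating set D of size at most 3n/(δ + 1) − 2. -/

import Mathlib

open SimpleGraph Set

/-- The predicate that an edge colouring `c` makes `G` rainbow connected: every pair of
vertices is joined by a path no two of whose edges receive the same colour. -/
def RainbowConnectedUnder {V : Type*} (G : SimpleGraph V) (c : Sym2 V → ℕ) : Prop :=
  ∀ u v : V, ∃ p : G.Walk u v, p.IsPath ∧ (p.edges.map c).Nodup

/-- The rainbow connection number of `G`: the least `n` such that some edge colouring
using colours `< n` makes `G` rainbow connected. -/
noncomputable def rc {V : Type*} (G : SimpleGraph V) : ℕ :=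
  sInf {n | ∃ c : Sym2 V → ℕ, (∀ e ∈ G.edgeSet, c e < n) ∧ RainbowConnectedUnder G c}

/-- Degree of a vertex (as the cardinality of its neighbour set). -/
noncomputable def deg {V : Type*} (G : SimpleGraph V) (v : V) : ℕ := (G.neighborSet v).ncard

/-- `D` is a dominating set of `G`. -/
def IsDominatingSet {V : Type*} (G : SimpleGraph V) (D : Set V) : Prop :=
  ∀ v : V, v ∈ D ∨ ∃ u ∈ D, G.Adj u v

/-- The connected domination number of `G`. -/
noncomputable def connDomNum {V : Type*} (G : SimpleGraph V) : ℕ :=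
  sInf {n | ∃ D : Set V, D.ncard = n ∧ IsDominatingSet G D ∧ (G.induce D).Connected}

/-- Distance of a vertex `v` to a set of vertices `D`. -/
noncomputable def distSet {V : Type*} (G : SimpleGraph V) (D : Set V) (v : V) : ℕ :=
  sInf ((fun u => G.dist u v) '' D)

/-- Diameter of `G`. -/
noncomputable def graphDiam {V : Type*} (G : SimpleGraph V) : ℕ :=
  sSup (Set.range fun p : V × V => G.dist p.1 p.2)

/-- Eccentricity of a vertex. -/
noncomputable def ecc {V : Type*} (G : SimpleGraph V) (v : V) : ℕ :=
  sSup (Set.range fun u => G.dist v u)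

/-- Radius of `G`. -/
noncomputable def graphRadius {V : Type*} (G : SimpleGraph V) : ℕ :=
  sInf (Set.range fun v => ecc G v)

/-- `G` is an interval graph: vertices can be assigned nonempty closed real intervals such
that two distinct vertices are adjacent iff their intervals intersect. -/
def IsIntervalGraph {V : Type*} (G : SimpleGraph V) : Prop :=
  ∃ a b : V → ℝ, (∀ v, a v ≤ b v) ∧
    ∀ u v : V, u ≠ v → (G.Adj u v ↔ (Set.Icc (a u) (b u) ∩ Set.Icc (a v) (b v)).Nonempty)

/-- `G` is a unit interval graph. -/
def IsUnitIntervalGraph {V : Type*} (G : SimpleGraph V) : Prop :=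
  ∃ a : V → ℝ,
    ∀ u v : V, u ≠ v →
      (G.Adj u v ↔ (Set.Icc (a u) (a u + 1) ∩ Set.Icc (a v) (a v + 1)).Nonempty)

/-- `G` is a circular arc graph: vertices can be assigned nonempty closed arcs of a circle
(images of closed intervals in `AddCircle 1`) such that two distinct vertices are adjacent
iff their arcs intersect. -/
def IsCircularArcGraph {V : Type*} (G : SimpleGraph V) : Prop :=
  ∃ a b : V → ℝ, (∀ v, a v ≤ b v) ∧
    ∀ u v : V, u ≠ v → (G.Adj u v ↔
      (((fun x : ℝ => (x : AddCircle (1:ℝ))) '' Set.Icc (a u) (b u)) ∩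
        ((fun x : ℝ => (x : AddCircle (1:ℝ))) '' Set.Icc (a v) (b v))).Nonempty)

/-- There is a path from `x` to `y` avoiding the closed neighbourhood of `z`. -/
def HasAvoidingPath {V : Type*} (G : SimpleGraph V) (x y z : V) : Prop :=
  ∃ p : G.Walk x y, p.IsPath ∧ ∀ w ∈ p.support, w ≠ z ∧ ¬ G.Adj z w

/-- `G` is AT-free: it has no asteroidal triple. -/
def IsATFree {V : Type*} (G : SimpleGraph V) : Prop :=
  ¬ ∃ x y z : V, x ≠ y ∧ y ≠ z ∧ x ≠ z ∧ ¬G.Adj x y ∧ ¬G.Adj y z ∧ ¬G.Adj x z ∧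
    HasAvoidingPath G x y z ∧ HasAvoidingPath G y z x ∧ HasAvoidingPath G x z y

/-- `G` is a threshold graph. -/
def IsThresholdGraph {V : Type*} (G : SimpleGraph V) : Prop :=
  ∃ (w : V → ℝ) (t : ℝ), ∀ u v : V, u ≠ v → (G.Adj u v ↔ t ≤ w u + w v)

/-- `G` is a chain graph: bipartite with the neighbourhoods of one side linearly ordered
by inclusion. -/
def IsChainGraph {V : Type*} (G : SimpleGraph V) : Prop :=
  ∃ A B : Set V, A ∪ B = Set.univ ∧ Disjoint A B ∧
    (∀ u v : V, G.Adj u v → ¬(u ∈ A ∧ v ∈ A) ∧ ¬(u ∈ B ∧ v ∈ B)) ∧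
    ∀ a₁ ∈ A, ∀ a₂ ∈ A,
      G.neighborSet a₁ ⊆ G.neighborSet a₂ ∨ G.neighborSet a₂ ⊆ G.neighborSet a₁

/-- `G` is chordal: it has no induced cycle of length greater than 3. -/
def IsChordal {V : Type*} (G : SimpleGraph V) : Prop :=
  ∀ n : ℕ, 4 ≤ n → IsEmpty (SimpleGraph.cycleGraph n ↪g G)

/-!
Call a connected set `D` economical if `(δ + 1) (|D| + 2) ≤ 3 |N[D]|`; single vertices are
economical, and the size bound is immediate for such a set. Let `D` be a maximal economical set
and `v` a vertex at distance `k ≥ 2` from it. Adding a shortest path from `D` to `v` costs at most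
`k` vertices, and `N[D]` gains all of `N[v]` except the `c` neighbours of `v` at distance 1 from
`D`. Maximality therefore gives `3 (δ + 1 - c) < (δ + 1) k`. If `k = 3` then `c = 0`, a
contradiction, so no vertex is further than 2 from `D`. If `k = 2` then `3 c > δ + 1 ≥ 3`, so
`c ≥ 2`. For `δ ≤ 1` the bound is at least `n`, and all vertices can be taken.
-/

section DistSet

variable {V : Type*} {G : SimpleGraph V} {D : Set V} {v w : V} {k : ℕ}

theorem exists_dist_eq_distSet (G : SimpleGraph V) (hD : D.Nonempty) (v : V) :
    ∃ u ∈ D, G.dist u v = distSet G D v :=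
  Nat.sInf_mem (hD.image fun u => G.dist u v)

theorem distSet_le_iff (hD : D.Nonempty) :
    distSet G D v ≤ k ↔ ∃ u ∈ D, G.dist u v ≤ k := by
  constructor
  · intro h
    obtain ⟨u, hu, huv⟩ := exists_dist_eq_distSet G hD v
    exact ⟨u, hu, huv.trans_le h⟩
  · rintro ⟨u, hu, huv⟩
    exact (Nat.sInf_le (mem_image_of_mem _ hu)).trans huv

theorem distSet_eq_zero_iff (hG : G.Connected) (hD : D.Nonempty) :
    distSet G D v = 0 ↔ v ∈ D := by
  simp [← Nat.le_zero, distSet_le_iff hD, hG.dist_eq_zero_iff]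

theorem distSet_le_distSet_add_one_of_adj (hvw : G.Adj v w) :
    distSet G D w ≤ distSet G D v + 1 := by
  rcases D.eq_empty_or_nonempty with rfl | hD
  · simp [distSet]
  · obtain ⟨u, hu, huv⟩ := exists_dist_eq_distSet G hD v
    have huw := hvw.diff_dist_adj (u := u)
    exact (distSet_le_iff hD).2 ⟨u, hu, by lia⟩

theorem exists_distSet_eq_add_one_of_lt (hG : G.Connected) (hD : D.Nonempty)
    (hv : k < distSet G D v) : ∃ w, distSet G D w = k + 1 := by
  obtain ⟨u, hu⟩ := hD
  have hu0 : distSet G D u = 0 := (distSet_eq_zero_iff hG ⟨u, hu⟩).2 hu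
  obtain ⟨p⟩ := hG.preconnected u v
  obtain ⟨⟨⟨x, w⟩, hxw⟩, -, hx, hw⟩ :=
    p.exists_boundary_dart {x | distSet G D x ≤ k} (by simp [hu0]) (by simpa using hv)
  have hstep := distSet_le_distSet_add_one_of_adj (D := D) hxw
  simp only [mem_ofPred_eq, not_le] at hx hw
  exact ⟨w, by lia⟩

end DistSet

section ClosedNeighborSet

variable {V : Type*} {G : SimpleGraph V} {D E : Set V} {v : V}

/-- The closed neighbourhood `N[D]` of a set of vertices: the vertices that lie in `D` or are
adjacent to a vertex of `D`. -/
def closedNeighborSet (G : SimpleGraph V) (D : Set V) : Set V :=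
  {v | ∃ u ∈ D, u = v ∨ G.Adj u v}

theorem closedNeighborSet_mono (h : D ⊆ E) : closedNeighborSet G D ⊆ closedNeighborSet G E :=
  fun _ ⟨u, hu, huv⟩ => ⟨u, h hu, huv⟩

theorem closedNeighborSet_singleton (G : SimpleGraph V) (v : V) :
    closedNeighborSet G {v} = insert v (G.neighborSet v) := by
  ext w
  simp [closedNeighborSet, eq_comm]

theorem ncard_closedNeighborSet_singleton (G : SimpleGraph V) (v : V)
    [Finite (G.neighborSet v)] :
    (closedNeighborSet G {v}).ncard = deg G v + 1 := by
  rw [closedNeighborSet_singleton, ncard_insert_of_notMem G.notMem_neighborSet_self, deg]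

theorem distSet_le_one_iff (hG : G.Connected) (hD : D.Nonempty) :
    distSet G D v ≤ 1 ↔ v ∈ closedNeighborSet G D := by
  simp only [distSet_le_iff hD, Nat.le_one_iff_eq_zero_or_eq_one, hG.dist_eq_zero_iff,
    dist_eq_one_iff_adj, closedNeighborSet, mem_ofPred_eq]

theorem closedNeighborSet_singleton_inter (hG : G.Connected) (hD : D.Nonempty)
    (hv : 1 < distSet G D v) :
    closedNeighborSet G {v} ∩ closedNeighborSet G D =
      G.neighborSet v ∩ {w | distSet G D w = 1} := by
  ext w
  simp only [closedNeighborSet_singleton, mem_inter_iff, mem_insert_iff, mem_neighborSet,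
    mem_ofPred_eq, ← distSet_le_one_iff hG hD]
  constructor
  · rintro ⟨rfl | hvw, hw⟩
    · lia
    · have := distSet_le_distSet_add_one_of_adj (D := D) hvw.symm
      exact ⟨hvw, by lia⟩
  · rintro ⟨hvw, hw⟩
    exact ⟨.inr hvw, hw.le⟩

theorem ncard_closedNeighborSet_singleton_sdiff [Finite (G.neighborSet v)] (hG : G.Connected)
    (hD : D.Nonempty) (hv : 1 < distSet G D v) :
    (G.neighborSet v ∩ {w | distSet G D w = 1}).ncard +
      (closedNeighborSet G {v} \ closedNeighborSet G D).ncard = deg G v + 1 := by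
  rw [← closedNeighborSet_singleton_inter hG hD hv, ← ncard_closedNeighborSet_singleton,
    closedNeighborSet_singleton, ncard_inter_add_ncard_sdiff_eq_ncard _ _]

theorem ncard_closedNeighborSet_add_ncard_sdiff_le (hE : (closedNeighborSet G E).Finite)
    (hDE : D ⊆ E) (hv : v ∈ E) :
    (closedNeighborSet G D).ncard + (closedNeighborSet G {v} \ closedNeighborSet G D).ncard ≤
      (closedNeighborSet G E).ncard := by
  have hsubD := closedNeighborSet_mono (G := G) hDE
  have hsubv := closedNeighborSet_mono (G := G) (singleton_subset_iff.2 hv)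
  rw [← ncard_union_eq disjoint_sdiff_right (hE.subset hsubD) (hE.subset hsubv).sdiff,
    union_sdiff_self]
  exact ncard_le_ncard (union_subset hsubD hsubv) hE

end ClosedNeighborSet

section ConnectedSuperset

variable {V : Type*} {G : SimpleGraph V} {D : Set V} {u v : V}

theorem connected_induce_insert_of_adj (hD : (G.induce D).Connected) (hu : u ∈ D)
    (huv : G.Adj u v) : (G.induce (insert v D)).Connected := by
  have hunion : D ∪ {u, v} = insert v D := by
    rw [union_insert, union_singleton, insert_eq_of_mem (mem_insert_of_mem v hu)]
  rw [← hunion]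
  exact induce_union_connected hD.preconnected
    (induce_pair_connected_of_adj huv).preconnected ⟨u, hu, mem_insert u {v}⟩

theorem exists_connected_superset_of_walk (p : G.Walk u v) (hD : (G.induce D).Connected)
    (hu : u ∈ D) :
    ∃ E, D ⊆ E ∧ v ∈ E ∧ (G.induce E).Connected ∧ E.ncard ≤ D.ncard + p.length := by
  induction p generalizing D with
  | nil => exact ⟨D, subset_rfl, hu, hD, le_rfl⟩
  | @cons u w v huw p ih =>
    obtain ⟨E, hDE, hv, hE, hcard⟩ :=
      ih (connected_induce_insert_of_adj hD hu huw) (mem_insert w D)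
    have hinsert := ncard_insert_le w D
    exact ⟨E, (subset_insert w D).trans hDE, hv, hE, by rw [Walk.length_cons]; lia⟩

end ConnectedSuperset

section IsEconomical

variable {V : Type*} {G : SimpleGraph V} {δ : ℕ} {D : Set V} {u v : V}

/-- A connected set `D` of vertices is economical with parameter `δ` if
`|D| ≤ 3 |N[D]| / (δ + 1) - 2`, written here without division and subtraction. The sought set is a
maximal economical one. -/
structure IsEconomical (G : SimpleGraph V) (δ : ℕ) (D : Set V) : Prop where
  connected : (G.induce D).Connected
  mul_ncard_add_two_le : (δ + 1) * (D.ncard + 2) ≤ 3 * (closedNeighborSet G D).ncard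

theorem IsEconomical.nonempty (hD : IsEconomical G δ D) : D.Nonempty :=
  nonempty_coe_sort.1 hD.connected.nonempty

theorem IsEconomical.ncard_le [Fintype V] (hD : IsEconomical G δ D) :
    (D.ncard : ℝ) ≤ 3 * (Fintype.card V : ℝ) / (δ + 1) - 2 := by
  have hcard : (δ + 1) * (D.ncard + 2) ≤ 3 * Fintype.card V :=
    hD.mul_ncard_add_two_le.trans <|
      Nat.mul_le_mul_left 3 ((ncard_le_card _).trans_eq Nat.card_eq_fintype_card)
  rw [le_sub_iff_add_le, le_div_iff₀' (by positivity)]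
  exact_mod_cast hcard

theorem isEconomical_singleton [Finite (G.neighborSet v)] (hv : δ ≤ deg G v) :
    IsEconomical G δ {v} where
  connected := ⟨Preconnected.of_subsingleton⟩
  mul_ncard_add_two_le := by
    rw [ncard_singleton, ncard_closedNeighborSet_singleton]
    lia

theorem three_mul_ncard_sdiff_lt_of_maximal [Finite V] (hD : Maximal (IsEconomical G δ) D)
    (hu : u ∈ D) (hv : v ∉ D) (p : G.Walk u v) :
    3 * (closedNeighborSet G {v} \ closedNeighborSet G D).ncard < (δ + 1) * p.length := by
  by_contra! hgain
  obtain ⟨E, hDE, hvE, hE, hcard⟩ := exists_connected_superset_of_walk p hD.prop.connected hu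
  have hEcon : (δ + 1) * (E.ncard + 2) ≤ 3 * (closedNeighborSet G E).ncard := calc
    (δ + 1) * (E.ncard + 2) ≤ (δ + 1) * (D.ncard + p.length + 2) := by gcongr
    _ = (δ + 1) * (D.ncard + 2) + (δ + 1) * p.length := by ring
    _ ≤ 3 * (closedNeighborSet G D).ncard +
        3 * (closedNeighborSet G {v} \ closedNeighborSet G D).ncard :=
      add_le_add hD.prop.mul_ncard_add_two_le hgain
    _ ≤ 3 * (closedNeighborSet G E).ncard := by
      rw [← mul_add]
      exact Nat.mul_le_mul_left 3 (ncard_closedNeighborSet_add_ncard_sdiff_le (toFinite _) hDE hvE)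
  exact hv (hD.le_of_ge ⟨hE, hEcon⟩ hDE hvE)

theorem three_mul_add_one_lt_of_maximal [Finite V] (hG : G.Connected)
    (hD : Maximal (IsEconomical G δ) D) (hδ : δ ≤ deg G v) (hv : 1 < distSet G D v) :
    3 * (δ + 1) < (δ + 1) * distSet G D v +
      3 * (G.neighborSet v ∩ {w | distSet G D w = 1}).ncard := by
  have hne := hD.prop.nonempty
  have hvD : v ∉ D := fun h => by
    have := (distSet_eq_zero_iff hG hne).2 h
    lia
  obtain ⟨u, hu, huv⟩ := exists_dist_eq_distSet G hne v
  obtain ⟨p, hp⟩ := hG.exists_walk_length_eq_dist u v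
  have hgain := three_mul_ncard_sdiff_lt_of_maximal hD hu hvD p
  rw [hp, huv] at hgain
  have hcount := ncard_closedNeighborSet_singleton_sdiff hG hne hv
  lia

theorem distSet_le_two_of_maximal [Finite V] (hG : G.Connected) (hδ : ∀ v, δ ≤ deg G v)
    (hD : Maximal (IsEconomical G δ) D) (v : V) : distSet G D v ≤ 2 := by
  by_contra! hv
  obtain ⟨w, hw⟩ := exists_distSet_eq_add_one_of_lt hG hD.prop.nonempty hv
  have hempty : G.neighborSet w ∩ {x | distSet G D x = 1} = ∅ := by
    refine eq_empty_of_forall_notMem fun x ⟨hwx, hx⟩ => ?_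
    have := distSet_le_distSet_add_one_of_adj (D := D) (G.adj_symm hwx)
    rw [mem_ofPred_eq] at hx
    lia
  have hlt := three_mul_add_one_lt_of_maximal hG hD (hδ w) (by lia)
  rw [hw, hempty, ncard_empty] at hlt
  lia

theorem two_le_ncard_of_maximal [Finite V] (hG : G.Connected) (hδ : δ ≤ deg G v) (hδ2 : 2 ≤ δ)
    (hD : Maximal (IsEconomical G δ) D) (hv : distSet G D v = 2) :
    2 ≤ (G.neighborSet v ∩ {w | distSet G D w = 1}).ncard := by
  have hlt := three_mul_add_one_lt_of_maximal hG hD hδ (by lia)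
  rw [hv] at hlt
  lia

end IsEconomical

theorem le_three_mul_div_sub_two {n : ℝ} {δ : ℕ} (hn : 4 ≤ n) (hδ : δ ≤ 1) :
    n ≤ 3 * n / (δ + 1) - 2 := by
  interval_cases δ <;> norm_num <;> linarith

/-- Every finite connected graph of order `n ≥ 4` and minimum degree
`δ` has a connected two-way two-step dominating set of size at most `3n/(δ + 1) − 2`. -/
theorem stmt_13 {V : Type*} [Fintype V] (G : SimpleGraph V) (hG : G.Connected)
    (hn : 4 ≤ Fintype.card V)
    (δ : ℕ) (hδ : ∀ v : V, δ ≤ deg G v) :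
    ∃ D : Set V, (∀ v : V, ∃ u ∈ D, G.dist u v ≤ 2) ∧ (G.induce D).Connected ∧
      (∀ v : V, deg G v = 1 → v ∈ D) ∧
      (∀ v : V, distSet G D v = 2 →
        2 ≤ (G.neighborSet v ∩ {w : V | distSet G D w = 1}).ncard) ∧
      (D.ncard : ℝ) ≤ 3 * (Fintype.card V : ℝ) / (δ + 1) - 2 := by
  rcases Nat.lt_or_ge δ 2 with hδ1 | hδ2
  · refine ⟨univ, fun v => ⟨v, mem_univ v, by simp⟩, (induceUnivIso G).connected_iff.2 hG,
      fun v _ => mem_univ v, fun v hv => ?_, ?_⟩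
    · have := (distSet_eq_zero_iff hG ⟨v, mem_univ v⟩).2 (mem_univ v)
      lia
    · rw [ncard_univ, Nat.card_eq_fintype_card]
      exact le_three_mul_div_sub_two (by exact_mod_cast hn) (by lia)
  · obtain ⟨r⟩ := hG.nonempty
    obtain ⟨D, -, hD⟩ := Finite.exists_le_maximal (isEconomical_singleton (hδ r))
    refine ⟨D, fun v => ?_, hD.prop.connected, fun v hv => ?_, fun v hv => ?_, hD.prop.ncard_le⟩
    · exact (distSet_le_iff hD.prop.nonempty).1 (distSet_le_two_of_maximal hG hδ hD v)
    · have := hδ v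
      lia
    · exact two_le_ncard_of_maximal hG (hδ v) hδ2 hD hv
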